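/- Appendix Lemma (bound on the relative heat-conductivity term): Assume ψ̂ ∈ C³(ℝ^{19} × (0,∞)) satisfies the growth conditions, that ∇²_ξ ψ̂(ξ,θ) is positive definite and ∂_θ η̂(ξ,θ) > 0 for all (ξ,θ), and let M, δ > 0. Let k : ℝ^{19} × (0,∞) → (0,∞) be C¹ and suppose there are δ̲ > 0 and C' > 0 such that k(ξ,θ) + θ²/k(ξ,θ) ≤ C' ê(ξ,θ) for all (ξ,θ). Then there exists a constant C = C(δ̲) > 0 such that for every (ξ,v,θ) ∈ ℝ^{19} × ℝ³ × (0,∞) with θ ≥ δ̲ and every (ξ̄,v̄,θ̄) ∈ Γ_{M,δ}: (θ²/k(ξ,θ)) | k(ξ,θ)/θ − k(ξ̄,θ̄)/θ̄ |² ≤ C I(ξ,v,θ|ξ̄,v̄,θ̄). -/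

import Mathlib

open Real MeasureTheory Filter Set Topology ENNReal NNReal

noncomputable section

abbrev Vec3 := Fin 3 → ℝ
abbrev Mat3 := Fin 3 → Fin 3 → ℝ
abbrev Xi := Mat3 × Mat3 × ℝ
abbrev Idx := (Fin 3 × Fin 3) ⊕ ((Fin 3 × Fin 3) ⊕ Unit)
abbrev FullState := Xi × Vec3 × ℝ

/-- Levi-Civita symbol on three indices. -/
def eps3 (i j k : Fin 3) : ℝ :=
  if (i, j, k) = (0, 1, 2) ∨ (i, j, k) = (1, 2, 0) ∨ (i, j, k) = (2, 0, 1) then 1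
  else if (i, j, k) = (2, 1, 0) ∨ (i, j, k) = (1, 0, 2) ∨ (i, j, k) = (0, 2, 1) then -1
  else 0

/-- Cofactor matrix (cof F)_{iα} = (1/2) ε_{ijk} ε_{αβγ} F_{jβ} F_{kγ}. -/
def cof3 (F : Mat3) : Mat3 := fun i α =>
  (1/2) * ∑ j, ∑ k, ∑ β, ∑ γ, eps3 i j k * eps3 α β γ * F j β * F k γ

/-- det F = (1/6) ε_{ijk} ε_{αβγ} F_{iα} F_{jβ} F_{kγ}. -/
def det3 (F : Mat3) : ℝ :=
  (1/6) * ∑ i, ∑ j, ∑ k, ∑ α, ∑ β, ∑ γ,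
    eps3 i j k * eps3 α β γ * F i α * F j β * F k γ

/-- The vector of null Lagrangians Φ(F) = (F, cof F, det F). -/
def Phi3 (F : Mat3) : Xi := (F, cof3 F, det3 F)

/-- Component ξ^B of ξ ∈ ℝ^19. -/
def xiComp (ξ : Xi) : Idx → ℝ
  | .inl (i, α) => ξ.1 i α
  | .inr (.inl (i, α)) => ξ.2.1 i α
  | .inr (.inr _) => ξ.2.2

def updMat (F : Mat3) (i α : Fin 3) (s : ℝ) : Mat3 :=
  Function.update F i (Function.update (F i) α s)

/-- Update component B of ξ to value s. -/
def xiUpd (ξ : Xi) : Idx → ℝ → Xi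
  | .inl (i, α), s => (updMat ξ.1 i α s, ξ.2)
  | .inr (.inl (i, α)), s => (ξ.1, updMat ξ.2.1 i α s, ξ.2.2)
  | .inr (.inr _), s => (ξ.1, ξ.2.1, s)

/-- ∂Φ^B/∂F_{iα}(F). -/
def dPhi (B : Idx) (i α : Fin 3) (F : Mat3) : ℝ :=
  deriv (fun s => xiComp (Phi3 (updMat F i α s)) B) (F i α)

/-- Partial derivative ∂ψ̂/∂ξ^B of a function ψ̂(ξ, θ). -/
def dXi (B : Idx) (ψ : Xi → ℝ → ℝ) (ξ : Xi) (θ : ℝ) : ℝ :=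
  deriv (fun s => ψ (xiUpd ξ B s) θ) (xiComp ξ B)

/-- Partial derivative ∂ψ̂/∂θ. -/
def dTh (ψ : Xi → ℝ → ℝ) (ξ : Xi) (θ : ℝ) : ℝ :=
  deriv (fun s => ψ ξ s) θ

/-- η̂(ξ,θ) = −∂_θ ψ̂(ξ,θ). -/
def etaHat (ψ : Xi → ℝ → ℝ) (ξ : Xi) (θ : ℝ) : ℝ := -(dTh ψ ξ θ)

/-- ê(ξ,θ) = ψ̂(ξ,θ) − θ ∂_θ ψ̂(ξ,θ). -/
def eHat (ψ : Xi → ℝ → ℝ) (ξ : Xi) (θ : ℝ) : ℝ := ψ ξ θ - θ * dTh ψ ξ θ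

/-- Spatial partial derivative ∂_α of a space-time field. -/
def pdx (α : Fin 3) (f : Vec3 → ℝ → ℝ) (x : Vec3) (t : ℝ) : ℝ :=
  deriv (fun s => f (Function.update x α s) t) (x α)

/-- Time derivative ∂_t of a space-time field. -/
def pdt (f : Vec3 → ℝ → ℝ) (x : Vec3) (t : ℝ) : ℝ :=
  deriv (fun s => f x s) t

def mnorm (F : Mat3) : ℝ := Real.sqrt (∑ i, ∑ j, (F i j)^2)
def vnorm (v : Vec3) : ℝ := Real.sqrt (∑ i, (v i)^2)

/-- |ξ|_{p,q,r} = |F|^p + |ζ|^q + |w|^r. -/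
def xiNorm (p q r : ℝ) (ξ : Xi) : ℝ :=
  mnorm ξ.1 ^ p + mnorm ξ.2.1 ^ q + |ξ.2.2| ^ r

/-- The compact set Γ_{M,δ}. -/
def Gamma (M δ : ℝ) : Set FullState :=
  {U | mnorm U.1.1 ≤ M ∧ mnorm U.1.2.1 ≤ M ∧ |U.1.2.2| ≤ M ∧
       vnorm U.2.1 ≤ M ∧ δ ≤ U.2.2 ∧ U.2.2 ≤ M}

/-- Relative free energy ψ̂(ξ,θ|ξ̄,θ̄). -/
def psiRel (ψ : Xi → ℝ → ℝ) (ξ : Xi) (θ : ℝ) (ξ' : Xi) (θ' : ℝ) : ℝ :=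
  ψ ξ θ - ψ ξ' θ' - (∑ B : Idx, dXi B ψ ξ' θ' * (xiComp ξ B - xiComp ξ' B))
    + etaHat ψ ξ' θ' * (θ - θ')

/-- Relative entropy function η̂(ξ,θ|ξ̄,θ̄). -/
def etaRel (ψ : Xi → ℝ → ℝ) (ξ : Xi) (θ : ℝ) (ξ' : Xi) (θ' : ℝ) : ℝ :=
  etaHat ψ ξ θ - etaHat ψ ξ' θ'
    - (∑ B : Idx, dXi B (etaHat ψ) ξ' θ' * (xiComp ξ B - xiComp ξ' B))
    - dTh (etaHat ψ) ξ' θ' * (θ - θ')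

/-- Relative stress (∂ψ̂/∂ξ^B)(ξ,θ|ξ̄,θ̄). -/
def dXiRel (B : Idx) (ψ : Xi → ℝ → ℝ) (ξ : Xi) (θ : ℝ) (ξ' : Xi) (θ' : ℝ) : ℝ :=
  dXi B ψ ξ θ - dXi B ψ ξ' θ'
    - (∑ A : Idx, dXi A (dXi B ψ) ξ' θ' * (xiComp ξ A - xiComp ξ' A))
    - dTh (dXi B ψ) ξ' θ' * (θ - θ')

/-- Relative entropy I(ξ,v,θ|ξ̄,v̄,θ̄). -/
def relEnt (ψ : Xi → ℝ → ℝ) (ξ : Xi) (v : Vec3) (θ : ℝ)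
    (ξ' : Xi) (v' : Vec3) (θ' : ℝ) : ℝ :=
  psiRel ψ ξ θ ξ' θ' + (1/2) * (∑ i, (v i - v' i)^2)
    + (etaHat ψ ξ θ - etaHat ψ ξ' θ') * (θ - θ')

/-- ψ̂ is C³ on ℝ^19 × (0,∞). -/
def PsiC3 (ψ : Xi → ℝ → ℝ) : Prop :=
  ContDiffOn ℝ 3 (fun p : Xi × ℝ => ψ p.1 p.2) (Set.univ ×ˢ Set.Ioi (0:ℝ))

/-- ∇²_ξ ψ̂ > 0 and ∂_θ η̂ > 0. -/
def PsiConvex (ψ : Xi → ℝ → ℝ) : Prop :=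
  ∀ ξ : Xi, ∀ θ : ℝ, 0 < θ →
    (∀ u : Idx → ℝ, u ≠ 0 →
      0 < ∑ A : Idx, ∑ B : Idx, dXi A (dXi B ψ) ξ θ * u A * u B) ∧
    0 < dTh (etaHat ψ) ξ θ

def gradFnorm (ψ : Xi → ℝ → ℝ) (ξ : Xi) (θ : ℝ) : ℝ :=
  Real.sqrt (∑ i, ∑ α, (dXi (.inl (i, α)) ψ ξ θ)^2)
def gradZnorm (ψ : Xi → ℝ → ℝ) (ξ : Xi) (θ : ℝ) : ℝ :=
  Real.sqrt (∑ i, ∑ α, (dXi (.inr (.inl (i, α))) ψ ξ θ)^2)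
def gradWnorm (ψ : Xi → ℝ → ℝ) (ξ : Xi) (θ : ℝ) : ℝ :=
  |dXi (.inr (.inr ())) ψ ξ θ|

/-- The growth conditions (gr.con.1)-(gr.con.3). -/
def GrowthCond (ψ : Xi → ℝ → ℝ) (c p q r ℓ : ℝ) : Prop :=
  0 < c ∧
  (∀ ξ : Xi, ∀ θ : ℝ, 0 < θ →
    c * (xiNorm p q r ξ + θ ^ ℓ) - c ≤ eHat ψ ξ θ ∧
    eHat ψ ξ θ ≤ c * (xiNorm p q r ξ + θ ^ ℓ) + c) ∧
  (∀ ε : ℝ, 0 < ε → ∃ R : ℝ, ∀ ξ : Xi, ∀ θ : ℝ, 0 < θ →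
    R < xiNorm p q r ξ + θ ^ ℓ →
    gradFnorm ψ ξ θ + gradZnorm ψ ξ θ ^ (p/(p-1)) + gradWnorm ψ ξ θ ^ (p/(p-2))
      ≤ ε * (xiNorm p q r ξ + θ ^ ℓ)) ∧
  (∀ ε : ℝ, 0 < ε → ∃ R : ℝ, ∀ ξ : Xi, ∀ θ : ℝ, 0 < θ →
    R < xiNorm p q r ξ + θ ^ ℓ →
    |dTh ψ ξ θ| ≤ ε * (xiNorm p q r ξ + θ ^ ℓ))

/-- The augmented thermoviscoelasticity system with fields (Z, Q, r), at a point (x,t). -/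
def AugSys (ψ : Xi → ℝ → ℝ) (ξf : Vec3 → ℝ → Xi) (vf : Vec3 → ℝ → Vec3)
    (θf : Vec3 → ℝ → ℝ) (Z : Vec3 → ℝ → Mat3) (Q : Vec3 → ℝ → Vec3)
    (r : Vec3 → ℝ → ℝ) (x : Vec3) (t : ℝ) : Prop :=
  (∀ B : Idx, pdt (fun y s => xiComp (ξf y s) B) x t
      = ∑ α, pdx α (fun y s => ∑ i, dPhi B i α (ξf y s).1 * vf y s i) x t) ∧
  (∀ i, pdt (fun y s => vf y s i) x t
      = ∑ α, pdx α (fun y s =>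
          ∑ B : Idx, dXi B ψ (ξf y s) (θf y s) * dPhi B i α (ξf y s).1) x t
        + ∑ α, pdx α (fun y s => Z y s i α) x t) ∧
  (pdt (fun y s => (1/2) * (∑ i, (vf y s i)^2) + eHat ψ (ξf y s) (θf y s)) x t
      = ∑ α, pdx α (fun y s => ∑ i,
          (∑ B : Idx, dXi B ψ (ξf y s) (θf y s) * dPhi B i α (ξf y s).1) * vf y s i) x t
        + ∑ α, pdx α (fun y s => ∑ i, Z y s i α * vf y s i) x t
        + ∑ α, pdx α (fun y s => Q y s α) x t + r x t) ∧
  (∀ i α β, pdx α (fun y s => (ξf y s).1 i β) x t = pdx β (fun y s => (ξf y s).1 i α) x t)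

/-- The entropy production identity for the augmented system. -/
def EntropyIdent (ψ : Xi → ℝ → ℝ) (ξf : Vec3 → ℝ → Xi) (vf : Vec3 → ℝ → Vec3)
    (θf : Vec3 → ℝ → ℝ) (Z : Vec3 → ℝ → Mat3) (Q : Vec3 → ℝ → Vec3)
    (r : Vec3 → ℝ → ℝ) (x : Vec3) (t : ℝ) : Prop :=
  pdt (fun y s => etaHat ψ (ξf y s) (θf y s)) x t
    - ∑ α, pdx α (fun y s => Q y s α / θf y s) x t
  = (∑ α, pdx α θf x t * Q x t α) / (θf x t)^2
    + (∑ α, ∑ i, pdx α (fun y s => vf y s i) x t * Z x t i α) / θf x t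
    + r x t / θf x t

/-- Newtonian viscous stress Z = μ ∇v. -/
def newtonianZ (μ : Mat3 → ℝ → ℝ) (ξf : Vec3 → ℝ → Xi) (vf : Vec3 → ℝ → Vec3)
    (θf : Vec3 → ℝ → ℝ) : Vec3 → ℝ → Mat3 :=
  fun x t i α => μ (ξf x t).1 (θf x t) * pdx α (fun y s => vf y s i) x t

/-- Fourier heat flux Q = k ∇θ. -/
def fourierQ (k : Mat3 → ℝ → ℝ) (ξf : Vec3 → ℝ → Xi)
    (θf : Vec3 → ℝ → ℝ) : Vec3 → ℝ → Vec3 :=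
  fun x t α => k (ξf x t).1 (θf x t) * pdx α θf x t

/-- The entropy identity for Newtonian viscosity and Fourier heat conduction (zero supply). -/
def EntropyIdentNF (ψ : Xi → ℝ → ℝ) (μ k : Mat3 → ℝ → ℝ) (ξf : Vec3 → ℝ → Xi)
    (vf : Vec3 → ℝ → Vec3) (θf : Vec3 → ℝ → ℝ) (x : Vec3) (t : ℝ) : Prop :=
  pdt (fun y s => etaHat ψ (ξf y s) (θf y s)) x t
    - ∑ α, pdx α (fun y s =>
        k (ξf y s).1 (θf y s) * pdx α θf y s / θf y s) x t
  = k (ξf x t).1 (θf x t) * (∑ α, (pdx α θf x t)^2) / (θf x t)^2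
    + μ (ξf x t).1 (θf x t) *
        (∑ α, ∑ i, (pdx α (fun y s => vf y s i) x t)^2) / θf x t

/-- Fundamental domain of the 3-torus. -/
def Box : Set Vec3 := Set.Icc 0 1

/-- Periodicity in the space variables with period 1. -/
def PeriodicX {E : Type*} (f : Vec3 → ℝ → E) : Prop :=
  ∀ (x : Vec3) (t : ℝ) (α : Fin 3), f (x + Pi.single α 1) t = f x t

/-- C^n regularity of a space-time field. -/
def FieldC {E : Type*} [NormedAddCommGroup E] [NormedSpace ℝ E]
    (n : ℕ) (f : Vec3 → ℝ → E) : Prop :=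
  ContDiff ℝ n (fun p : Vec3 × ℝ => f p.1 p.2)

/-- Spatial integral of the relative entropy at time t. -/
def relEntInt (ψ : Xi → ℝ → ℝ) (ξf : Vec3 → ℝ → Xi) (vf : Vec3 → ℝ → Vec3)
    (θf : Vec3 → ℝ → ℝ) (ξf' : Vec3 → ℝ → Xi) (vf' : Vec3 → ℝ → Vec3)
    (θf' : Vec3 → ℝ → ℝ) (t : ℝ) : ℝ :=
  ∫ x in Box, relEnt ψ (ξf x t) (vf x t) (θf x t) (ξf' x t) (vf' x t) (θf' x t)


/-- Spatial partial derivative of a static field. -/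
def pds (α : Fin 3) (f : Vec3 → ℝ) (x : Vec3) : ℝ :=
  deriv (fun s => f (Function.update x α s)) (x α)

/-- Deformation gradient ∇y of a static map y : ℝ³ → ℝ³. -/
def gradV (y : Vec3 → Vec3) (x : Vec3) : Mat3 :=
  fun i α => pds α (fun z => y z i) x

/-- ∂ψ/∂F_{iα} for ψ = ψ(F,θ). -/
def dFM (i α : Fin 3) (ψ : Mat3 → ℝ → ℝ) (F : Mat3) (θ : ℝ) : ℝ :=
  deriv (fun s => ψ (updMat F i α s) θ) (F i α)

/-- ∂ψ/∂θ for ψ = ψ(F,θ). -/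
def dThM (ψ : Mat3 → ℝ → ℝ) (F : Mat3) (θ : ℝ) : ℝ :=
  deriv (fun s => ψ F s) θ

/-- Index set for the full extended state U = (ξ, v, θ) ∈ ℝ²³. -/
abbrev UIdx := Idx ⊕ (Fin 3 ⊕ Unit)

def uComp (U : FullState) : UIdx → ℝ
  | .inl B => xiComp U.1 B
  | .inr (.inl i) => U.2.1 i
  | .inr (.inr _) => U.2.2

def uUpd (U : FullState) : UIdx → ℝ → FullState
  | .inl B, s => (xiUpd U.1 B s, U.2)
  | .inr (.inl i), s => (U.1, Function.update U.2.1 i s, U.2.2)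
  | .inr (.inr _), s => (U.1, U.2.1, s)

/-- Partial derivative in the state variables (ξ,v,θ). -/
def pdU (B : UIdx) (f : FullState → ℝ) (U : FullState) : ℝ :=
  deriv (fun s => f (uUpd U B s)) (uComp U B)

/-- Second partial derivative in the state variables (ξ,v,θ). -/
def pdU2 (A B : UIdx) (f : FullState → ℝ) (U : FullState) : ℝ :=
  pdU A (fun V => pdU B f V) U

/-- Test functions for the weak formulation on T³ × [0,T):
C¹, periodic in x, compactly supported in time in [0,T). -/
def TestFun (T : ℝ) (φ : Vec3 → ℝ → ℝ) : Prop :=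
  ContDiff ℝ 1 (fun p : Vec3 × ℝ => φ p.1 p.2) ∧ PeriodicX φ ∧
  ∃ T' : ℝ, T' < T ∧ ∀ (x : Vec3) (t : ℝ), T' ≤ t → φ x t = 0

/-- The elastic stress Σ_{iα} of the augmented constitutive theory. -/
def SigmaA (ψ : Xi → ℝ → ℝ) (ξ : Xi) (θ : ℝ) (i α : Fin 3) : ℝ :=
  ∑ B : Idx, dXi B ψ ξ θ * dPhi B i α ξ.1


/-!
Enclose `Γ_{M,δ}` in a compact convex box of states. In the box `θ²/k` is bounded, `k/θ` is
Lipschitz, and the relative entropy `I` is bounded below by a multiple of the squared distance,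
because `ψ` is convex in `ξ` at the temperature `θ̄` and `η` increases with temperature; so the
squared distance dominates the left-hand side and is dominated by `I`.

Outside the box the left-hand side is at most a multiple of `k + θ²/k`, hence of `ê`, and it remains
to bound `ê` by a multiple of `I`. Where `|ξ|_{p,q,r} + θ^ℓ` is large, `I` is `ê - θ̄ η` minus an
affine function of `ξ`, up to the nonnegative kinetic term, and `ê` dominates the two subtracted
terms. Where it is bounded, the state can only have left the box through low temperatures; there `ê`
is bounded, and since `∂_θ I = ∂_θ η (θ - θ̄)`, the relative entropy decreases on `(0, θ̄]`, so
at temperatures below `δ/2` it exceeds its value at `δ/2`, which stays away from zero.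
-/

section General

theorem half_mul_sq_le_of_le_deriv2 {g g' g'' : ℝ → ℝ} {m x y : ℝ}
    (hg : ∀ t ∈ uIcc x y, HasDerivAt g (g' t) t)
    (hg' : ∀ t ∈ uIcc x y, HasDerivAt g' (g'' t) t)
    (hm : ∀ t ∈ uIcc x y, m ≤ g'' t) :
    m / 2 * (y - x) ^ 2 ≤ g y - g x - g' x * (y - x) := by
  let f : ℝ → ℝ := fun t => g t - m / 2 * t ^ 2
  have hf : ∀ t ∈ uIcc x y, HasDerivAt f (g' t - m * t) t := fun t ht =>
    ((hg t ht).fun_sub ((hasDerivAt_pow 2 t).const_mul (m / 2))).congr_deriv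
      (by norm_num; ring)
  have hf' : ∀ t ∈ uIcc x y, HasDerivAt (fun t => g' t - m * t) (g'' t - m) t := fun t ht => by
    simpa using (hg' t ht).fun_sub ((hasDerivAt_id t).const_mul m)
  have hconv : ConvexOn ℝ (uIcc x y) f :=
    convexOn_of_hasDerivWithinAt2_nonneg (convex_uIcc x y)
      (fun t ht => (hf t ht).continuousAt.continuousWithinAt)
      (fun t ht => (hf t (interior_subset ht)).hasDerivWithinAt)
      (fun t ht => (hf' t (interior_subset ht)).hasDerivWithinAt)
      (fun t ht => sub_nonneg.2 (hm t (interior_subset ht)))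
  have tangent : (g' x - m * x) * (y - x) ≤ f y - f x := by
    rcases lt_trichotomy x y with hxy | rfl | hxy
    · have h := hconv.le_slope_of_hasDerivAt left_mem_uIcc right_mem_uIcc hxy
        (hf x left_mem_uIcc)
      rwa [slope_def_field, le_div_iff₀ (sub_pos.2 hxy)] at h
    · simp
    · have h := hconv.slope_le_of_hasDerivAt right_mem_uIcc left_mem_uIcc hxy
        (hf x left_mem_uIcc)
      rw [slope_def_field, div_le_iff₀ (sub_pos.2 hxy)] at h
      linarith
  simp only [f] at tangent
  linarith

theorem norm_sq_le_add_norm_sq {E F : Type*} [SeminormedAddCommGroup E] [SeminormedAddCommGroup F]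
    (z : E × F) : ‖z‖ ^ 2 ≤ ‖z.1‖ ^ 2 + ‖z.2‖ ^ 2 := by
  rcases max_choice ‖z.1‖ ‖z.2‖ with h | h <;> rw [Prod.norm_def, h]
  · exact le_add_of_nonneg_right (sq_nonneg _)
  · exact le_add_of_nonneg_left (sq_nonneg _)

theorem exists_pos_mul_norm_sq_le_of_isCompact {X E : Type*} [TopologicalSpace X]
    [NormedAddCommGroup E] [NormedSpace ℝ E] [ProperSpace E] {K : Set X} (hK : IsCompact K)
    {Q : X → E → ℝ} (hQ : ContinuousOn (Function.uncurry Q) (K ×ˢ Metric.sphere 0 1))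
    (hsmul : ∀ x ∈ K, ∀ (t : ℝ) (u : E), Q x (t • u) = t ^ 2 * Q x u)
    (hpos : ∀ x ∈ K, ∀ u : E, u ≠ 0 → 0 < Q x u) :
    ∃ m : ℝ, 0 < m ∧ ∀ x ∈ K, ∀ u : E, m * ‖u‖ ^ 2 ≤ Q x u := by
  obtain ⟨m, hm, h⟩ := (hK.prod (isCompact_sphere (0 : E) 1)).exists_forall_le' hQ
    (fun z hz => hpos z.1 hz.1 z.2 (ne_zero_of_mem_unit_sphere ⟨z.2, hz.2⟩))
  refine ⟨m, hm, fun x hx u => ?_⟩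
  rcases eq_or_ne u 0 with rfl | hu
  · simpa using (hsmul x hx 0 0).ge
  · have hnorm : ‖u‖ ≠ 0 := norm_ne_zero_iff.2 hu
    have hunit : m ≤ Q x (‖u‖⁻¹ • u) := h (x, ‖u‖⁻¹ • u) ⟨hx, by simp [norm_smul, hnorm]⟩
    calc m * ‖u‖ ^ 2 ≤ Q x (‖u‖⁻¹ • u) * ‖u‖ ^ 2 := by gcongr
      _ = Q x u := by rw [hsmul x hx]; field_simp

theorem exists_le_mul_rpow_add {p ε : ℝ} (hp : 1 < p) (hε : 0 < ε) :
    ∃ T : ℝ, 0 < T ∧ ∀ x : ℝ, 0 ≤ x → x ≤ ε * x ^ p + T := by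
  obtain ⟨T, hT⟩ := eventually_atTop.1
    ((_root_.tendsto_rpow_atTop (sub_pos.2 hp)).eventually_ge_atTop ε⁻¹)
  refine ⟨max T 1, by positivity, fun x hx => ?_⟩
  rcases le_total (max T 1) x with hTx | hxT
  · have hx0 : 0 < x := one_pos.trans_le ((le_max_right T 1).trans hTx)
    have h := hT x ((le_max_left T 1).trans hTx)
    rw [Real.rpow_sub_one hx0.ne', le_div_iff₀ hx0, inv_mul_le_iff₀ hε] at h
    exact h.trans (le_add_of_nonneg_right (by positivity))
  · exact hxT.trans (le_add_of_nonneg_left (by positivity))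

theorem sq_div_mul_div_sub_sq_le {κ θ : ℝ} (hκ : 0 < κ) (hθ : θ ≠ 0) (b : ℝ) :
    θ ^ 2 / κ * (κ / θ - b) ^ 2 ≤ 2 * (1 + b ^ 2) * (κ + θ ^ 2 / κ) := by
  have hq : 0 ≤ θ ^ 2 / κ := by positivity
  calc θ ^ 2 / κ * (κ / θ - b) ^ 2 ≤ θ ^ 2 / κ * (2 * ((κ / θ) ^ 2 + b ^ 2)) := by
        gcongr
        nlinarith [sq_nonneg (κ / θ + b)]
    _ = 2 * κ + 2 * b ^ 2 * (θ ^ 2 / κ) := by field_simp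
    _ ≤ 2 * (1 + b ^ 2) * (κ + θ ^ 2 / κ) := by nlinarith [mul_nonneg (sq_nonneg b) hκ.le]

end General

section Coordinates

open Function (uncurry)

/-- The linear identification of `Xi` with `ℝ¹⁹` given by the components `xiComp`. -/
def xiEquiv : Xi ≃ₗ[ℝ] (Idx → ℝ) where
  toFun := xiComp
  map_add' u w := by ext (⟨i, α⟩ | ⟨i, α⟩ | _) <;> rfl
  map_smul' t u := by ext (⟨i, α⟩ | ⟨i, α⟩ | _) <;> rfl
  invFun w := (fun i α => w (.inl (i, α)), fun i α => w (.inr (.inl (i, α))), w (.inr (.inr ())))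
  left_inv _ := rfl
  right_inv w := by ext (⟨i, α⟩ | ⟨i, α⟩ | _) <;> rfl

/-- The basis of `Xi` dual to the components `xiComp`, along which `dXi` differentiates. -/
def xiBasis : Module.Basis Idx ℝ Xi := .ofEquivFun xiEquiv

theorem xiComp_sub (ξ ξ' : Xi) (B : Idx) : xiComp (ξ - ξ') B = xiComp ξ B - xiComp ξ' B :=
  congr_fun (map_sub xiEquiv ξ ξ') B

theorem xiComp_smul (t : ℝ) (u : Xi) (B : Idx) : xiComp (t • u) B = t * xiComp u B :=
  congr_fun (map_smul xiEquiv t u) B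

theorem sum_xiComp_smul_xiBasis (u : Xi) : ∑ B, xiComp u B • xiBasis B = u :=
  xiBasis.sum_equivFun u

theorem xiComp_xiUpd (ξ : Xi) (B : Idx) (s : ℝ) :
    xiComp (xiUpd ξ B s) = Function.update (xiComp ξ) B s := by
  ext A
  rcases A with ⟨i, α⟩ | ⟨i, α⟩ | _ <;> rcases B with ⟨j, β⟩ | ⟨j, β⟩ | _ <;>
    simp only [xiComp, xiUpd, updMat, Function.update_apply, Sum.inl.injEq, Sum.inr.injEq,
      Prod.mk.injEq, reduceCtorEq, if_false] <;> split_ifs <;> simp_all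

theorem xiUpd_eq_add_smul_xiBasis (ξ : Xi) (B : Idx) (s : ℝ) :
    xiUpd ξ B s = ξ + (s - xiComp ξ B) • xiBasis B := by
  refine xiEquiv.injective ?_
  have hbasis : xiEquiv (xiBasis B) = Pi.single B 1 := by
    simp [xiBasis, Module.Basis.coe_ofEquivFun]
  rw [map_add, map_smul, hbasis, ← Pi.single_smul]
  change xiComp (xiUpd ξ B s) = xiComp ξ + _
  rw [xiComp_xiUpd]
  ext A
  rcases eq_or_ne A B with rfl | h <;> simp [*]

/-- The domain `ℝ¹⁹ × (0, ∞)` of the constitutive functions. -/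
def stateSpace : Set (Xi × ℝ) := univ ×ˢ Ioi 0

theorem isOpen_stateSpace : IsOpen stateSpace := isOpen_univ.prod isOpen_Ioi

theorem mem_stateSpace {ξ : Xi} {θ : ℝ} : (ξ, θ) ∈ stateSpace ↔ 0 < θ := by
  simp [stateSpace]

variable {f : Xi → ℝ → ℝ} {ξ u : Xi} {θ t : ℝ}

theorem dXi_eq_fderiv (hf : DifferentiableAt ℝ (uncurry f) (ξ, θ)) (B : Idx) :
    dXi B f ξ θ = fderiv ℝ (uncurry f) (ξ, θ) (xiBasis B, 0) := by
  have hline : HasDerivAt (fun s => (xiUpd ξ B s, θ)) (xiBasis B, (0 : ℝ)) (xiComp ξ B) := by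
    simp only [xiUpd_eq_add_smul_xiBasis]
    simpa using ((((hasDerivAt_id (xiComp ξ B)).sub_const (xiComp ξ B)).smul_const
      (xiBasis B)).const_add ξ).prodMk (hasDerivAt_const _ θ)
  have hbase : (xiUpd ξ B (xiComp ξ B), θ) = (ξ, θ) := by simp [xiUpd_eq_add_smul_xiBasis]
  exact (hf.hasFDerivAt.comp_hasDerivAt_of_eq _ hline hbase.symm).deriv

theorem sum_dXi_mul_xiComp (hf : DifferentiableAt ℝ (uncurry f) (ξ, θ)) (u : Xi) :
    ∑ B, dXi B f ξ θ * xiComp u B = fderiv ℝ (uncurry f) (ξ, θ) (u, 0) := by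
  let D : Xi →ₗ[ℝ] ℝ := fderiv ℝ (uncurry f) (ξ, θ) ∘ₗ LinearMap.inl ℝ Xi ℝ
  calc ∑ B, dXi B f ξ θ * xiComp u B = ∑ B, xiComp u B • D (xiBasis B) :=
        Finset.sum_congr rfl fun B _ => by rw [dXi_eq_fderiv hf, mul_comm]; rfl
    _ = D u := by simp_rw [← map_smul, ← map_sum, sum_xiComp_smul_xiBasis]

theorem hasDerivAt_xi_line (hf : DifferentiableAt ℝ (uncurry f) (ξ + t • u, θ)) :
    HasDerivAt (fun t : ℝ => f (ξ + t • u) θ) (∑ B, dXi B f (ξ + t • u) θ * xiComp u B) t := by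
  rw [sum_dXi_mul_xiComp hf]
  have hline : HasDerivAt (fun t : ℝ => (ξ + t • u, θ)) (u, (0 : ℝ)) t := by
    simpa using (((hasDerivAt_id t).smul_const u).const_add ξ).prodMk (hasDerivAt_const _ θ)
  exact hf.hasFDerivAt.comp_hasDerivAt t hline

theorem hasDerivAt_temperature (hf : DifferentiableAt ℝ (uncurry f) (ξ, θ)) :
    HasDerivAt (f ξ) (fderiv ℝ (uncurry f) (ξ, θ) (0, 1)) θ :=
  hf.hasFDerivAt.comp_hasDerivAt θ ((hasDerivAt_const θ ξ).prodMk (hasDerivAt_id θ))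

end Coordinates

section Regularity

open Function (uncurry)

variable {f ψ : Xi → ℝ → ℝ} {m n : WithTop ℕ∞} {ξ u : Xi} {θ t : ℝ}

theorem differentiableAt_of_contDiffOn_stateSpace (hf : ContDiffOn ℝ n (uncurry f) stateSpace)
    (hn : n ≠ 0) (hθ : 0 < θ) : DifferentiableAt ℝ (uncurry f) (ξ, θ) :=
  (hf.differentiableOn hn).differentiableAt
    (isOpen_stateSpace.mem_nhds (mem_stateSpace.2 hθ))

theorem dTh_eq_fderiv (hf : DifferentiableAt ℝ (uncurry f) (ξ, θ)) :
    dTh f ξ θ = fderiv ℝ (uncurry f) (ξ, θ) (0, 1) :=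
  (hasDerivAt_temperature hf).deriv

theorem hasDerivAt_dTh (hf : DifferentiableAt ℝ (uncurry f) (ξ, θ)) :
    HasDerivAt (f ξ) (dTh f ξ θ) θ :=
  (hasDerivAt_temperature hf).differentiableAt.hasDerivAt

theorem contDiffOn_fderiv_apply (hf : ContDiffOn ℝ n (uncurry f) stateSpace) (hmn : m + 1 ≤ n)
    (w : Xi × ℝ) : ContDiffOn ℝ m (fun z => fderiv ℝ (uncurry f) z w) stateSpace :=
  (hf.fderiv_of_isOpen isOpen_stateSpace hmn).clm_apply contDiffOn_const

theorem contDiffOn_dXi (hf : ContDiffOn ℝ n (uncurry f) stateSpace) (hmn : m + 1 ≤ n) (B : Idx) :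
    ContDiffOn ℝ m (uncurry (dXi B f)) stateSpace :=
  (contDiffOn_fderiv_apply hf hmn _).congr fun _ hz => dXi_eq_fderiv
    (differentiableAt_of_contDiffOn_stateSpace hf (by rintro rfl; simp at hmn) hz.2) B

theorem contDiffOn_dTh (hf : ContDiffOn ℝ n (uncurry f) stateSpace) (hmn : m + 1 ≤ n) :
    ContDiffOn ℝ m (uncurry (dTh f)) stateSpace :=
  (contDiffOn_fderiv_apply hf hmn _).congr fun _ hz => dTh_eq_fderiv
    (differentiableAt_of_contDiffOn_stateSpace hf (by rintro rfl; simp at hmn) hz.2)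

theorem contDiffOn_etaHat (hψ : ContDiffOn ℝ n (uncurry ψ) stateSpace) (hmn : m + 1 ≤ n) :
    ContDiffOn ℝ m (uncurry (etaHat ψ)) stateSpace :=
  (contDiffOn_dTh hψ hmn).neg

end Regularity

section Boxes

/-- The box of states with `‖ξ‖ ≤ L` (sup norm) and temperature in `[a, L]`. -/
def thermoBox (a L : ℝ) : Set (Xi × ℝ) := Metric.closedBall 0 L ×ˢ Icc a L

variable {a b L L' : ℝ}

theorem isCompact_thermoBox : IsCompact (thermoBox a L) :=
  (isCompact_closedBall _ _).prod isCompact_Icc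

theorem convex_thermoBox : Convex ℝ (thermoBox a L) :=
  (convex_closedBall _ _).prod (convex_Icc _ _)

theorem thermoBox_subset_stateSpace (ha : 0 < a) : thermoBox a L ⊆ stateSpace :=
  fun _ hz => mem_stateSpace.2 (ha.trans_le hz.2.1)

theorem thermoBox_subset_thermoBox (hba : b ≤ a) (hL : L ≤ L') : thermoBox a L ⊆ thermoBox b L' :=
  prod_mono (Metric.closedBall_subset_closedBall hL) (Icc_subset_Icc hba hL)

theorem norm_le_mnorm (F : Mat3) : ‖F‖ ≤ mnorm F := by
  refine (pi_norm_le_iff_of_nonneg (Real.sqrt_nonneg _)).2 fun i =>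
    (pi_norm_le_iff_of_nonneg (Real.sqrt_nonneg _)).2 fun j => Real.abs_le_sqrt ?_
  calc F i j ^ 2 ≤ ∑ j, F i j ^ 2 :=
        Finset.single_le_sum (f := fun j => F i j ^ 2) (fun _ _ => sq_nonneg _) (Finset.mem_univ j)
    _ ≤ ∑ i, ∑ j, F i j ^ 2 :=
        Finset.single_le_sum (f := fun i => ∑ j, F i j ^ 2)
          (fun _ _ => Finset.sum_nonneg fun _ _ => sq_nonneg _) (Finset.mem_univ i)

theorem norm_le_of_mnorm_le {ξ : Xi} (hF : mnorm ξ.1 ≤ L) (hζ : mnorm ξ.2.1 ≤ L)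
    (hw : |ξ.2.2| ≤ L) : ‖ξ‖ ≤ L :=
  max_le ((norm_le_mnorm _).trans hF) (max_le ((norm_le_mnorm _).trans hζ) hw)

theorem mem_thermoBox_of_mem_Gamma {M δ : ℝ} {U : FullState} (hU : U ∈ Gamma M δ) :
    (U.1, U.2.2) ∈ thermoBox δ M :=
  let ⟨hF, hζ, hw, _, hδ, hM⟩ := hU
  ⟨mem_closedBall_zero_iff.2 (norm_le_of_mnorm_le hF hζ hw), hδ, hM⟩

end Boxes

section RelativeEntropy

open Function (uncurry)

variable {ψ : Xi → ℝ → ℝ}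

/-- The quadratic form of the Hessian `∇²_ξ ψ`. -/
def xiHess (ψ : Xi → ℝ → ℝ) (ξ : Xi) (θ : ℝ) (u : Xi) : ℝ :=
  ∑ A, ∑ B, dXi A (dXi B ψ) ξ θ * xiComp u A * xiComp u B

/-- The thermal part of the relative entropy: what changing the temperature from `θ'` to `θ` at
fixed `ξ` contributes to it. -/
def thermalRel (ψ : Xi → ℝ → ℝ) (ξ : Xi) (θ θ' : ℝ) : ℝ :=
  ψ ξ θ - ψ ξ θ' + etaHat ψ ξ θ * (θ - θ')

theorem relEnt_eq_psiRel_add_thermalRel (ψ : Xi → ℝ → ℝ) (ξ ξ' : Xi) (v v' : Vec3) (θ θ' : ℝ) :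
    relEnt ψ ξ v θ ξ' v' θ' =
      psiRel ψ ξ θ' ξ' θ' + thermalRel ψ ξ θ θ' + 1 / 2 * ∑ i, (v i - v' i) ^ 2 := by
  unfold relEnt psiRel thermalRel
  ring

theorem psiRel_add_thermalRel_le_relEnt (ψ : Xi → ℝ → ℝ) (ξ ξ' : Xi) (v v' : Vec3) (θ θ' : ℝ) :
    psiRel ψ ξ θ' ξ' θ' + thermalRel ψ ξ θ θ' ≤ relEnt ψ ξ v θ ξ' v' θ' := by
  rw [relEnt_eq_psiRel_add_thermalRel]
  exact le_add_of_nonneg_right (by positivity)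

theorem xiHess_smul (ψ : Xi → ℝ → ℝ) (ξ : Xi) (θ t : ℝ) (u : Xi) :
    xiHess ψ ξ θ (t • u) = t ^ 2 * xiHess ψ ξ θ u := by
  simp_rw [xiHess, xiComp_smul, Finset.mul_sum]
  exact Finset.sum_congr rfl fun _ _ => Finset.sum_congr rfl fun _ _ => by ring

theorem PsiConvex.xiHess_pos (hconv : PsiConvex ψ) {ξ u : Xi} {θ : ℝ} (hθ : 0 < θ) (hu : u ≠ 0) :
    0 < xiHess ψ ξ θ u :=
  (hconv ξ θ hθ).1 _ (xiEquiv.map_ne_zero_iff.2 hu)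

theorem continuous_xiComp (B : Idx) : Continuous fun u => xiComp u B :=
  (continuous_apply B).comp xiEquiv.toLinearMap.continuous_of_finiteDimensional

theorem continuousOn_xiHess (hψ : ContDiffOn ℝ 2 (uncurry ψ) stateSpace) :
    ContinuousOn (fun y : (Xi × ℝ) × Xi => xiHess ψ y.1.1 y.1.2 y.2) (stateSpace ×ˢ univ) := by
  refine continuousOn_finsetSum _ fun A _ => continuousOn_finsetSum _ fun B _ => ?_
  have hcoeff : ContinuousOn (uncurry (dXi A (dXi B ψ))) stateSpace :=
    (contDiffOn_dXi (m := 0) (contDiffOn_dXi (m := 1) hψ (by norm_num) B) (by simp) A).continuousOn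
  exact ((hcoeff.comp continuousOn_fst fun _ hy => hy.1).mul
    ((continuous_xiComp A).comp continuous_snd).continuousOn).mul
    ((continuous_xiComp B).comp continuous_snd).continuousOn

theorem exists_pos_mul_norm_sq_le_xiHess (hψ : ContDiffOn ℝ 2 (uncurry ψ) stateSpace)
    (hconv : PsiConvex ψ) {a : ℝ} (ha : 0 < a) (L : ℝ) :
    ∃ m : ℝ, 0 < m ∧ ∀ z ∈ thermoBox a L, ∀ u, m * ‖u‖ ^ 2 ≤ xiHess ψ z.1 z.2 u :=
  exists_pos_mul_norm_sq_le_of_isCompact (Q := fun z => xiHess ψ z.1 z.2) isCompact_thermoBox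
    ((continuousOn_xiHess hψ).mono (prod_mono (thermoBox_subset_stateSpace ha) (subset_univ _)))
    (fun _ _ => xiHess_smul ψ _ _)
    (fun _ hz _ hu => hconv.xiHess_pos (thermoBox_subset_stateSpace ha hz).2 hu)

theorem hasDerivAt_sum_dXi_xi_line (hψ : ContDiffOn ℝ 2 (uncurry ψ) stateSpace) {θ : ℝ} (hθ : 0 < θ)
    (ξ u : Xi) (t : ℝ) :
    HasDerivAt (fun t : ℝ => ∑ B, dXi B ψ (ξ + t • u) θ * xiComp u B)
      (xiHess ψ (ξ + t • u) θ u) t := by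
  have hdXi (B : Idx) : DifferentiableAt ℝ (uncurry (dXi B ψ)) (ξ + t • u, θ) :=
    differentiableAt_of_contDiffOn_stateSpace (contDiffOn_dXi (m := 1) hψ (by norm_num) B)
      one_ne_zero hθ
  have hsum := HasDerivAt.fun_sum (u := Finset.univ) fun B _ =>
    (hasDerivAt_xi_line (hdXi B)).mul_const (xiComp u B)
  refine hsum.congr_deriv ?_
  simp_rw [xiHess, Finset.sum_mul]
  exact Finset.sum_comm

theorem exists_pos_mul_norm_sq_le_psiRel (hψ : ContDiffOn ℝ 2 (uncurry ψ) stateSpace)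
    (hconv : PsiConvex ψ) {a : ℝ} (ha : 0 < a) (L : ℝ) :
    ∃ m : ℝ, 0 < m ∧ ∀ ξ ξ' θ, (ξ, θ) ∈ thermoBox a L → (ξ', θ) ∈ thermoBox a L →
      m * ‖ξ - ξ'‖ ^ 2 ≤ psiRel ψ ξ θ ξ' θ := by
  obtain ⟨m, hm, hess⟩ := exists_pos_mul_norm_sq_le_xiHess hψ hconv ha L
  refine ⟨m / 2, half_pos hm, fun ξ ξ' θ hz hz' => ?_⟩
  have hθ : 0 < θ := ha.trans_le hz.2.1
  have taylor := half_mul_sq_le_of_le_deriv2 (x := 0) (y := 1) (m := m * ‖ξ - ξ'‖ ^ 2)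
    (g := fun t => ψ (ξ' + t • (ξ - ξ')) θ)
    (fun t _ => hasDerivAt_xi_line
      (differentiableAt_of_contDiffOn_stateSpace hψ two_ne_zero hθ))
    (fun t _ => hasDerivAt_sum_dXi_xi_line hψ hθ ξ' (ξ - ξ') t)
    (fun t ht => hess (ξ' + t • (ξ - ξ'), θ) ⟨(convex_closedBall 0 L).add_smul_sub_mem hz'.1 hz.1
      (by rwa [uIcc_of_le zero_le_one] at ht), hz.2⟩ _)
  simp only [one_smul, zero_smul, add_zero, add_sub_cancel, sub_zero, one_pow, mul_one,
    xiComp_sub] at taylor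
  unfold psiRel
  linarith

variable {ξ : Xi} {θ : ℝ}

theorem hasDerivAt_etaHat (hψ : ContDiffOn ℝ 2 (uncurry ψ) stateSpace) (hθ : 0 < θ) :
    HasDerivAt (etaHat ψ ξ) (dTh (etaHat ψ) ξ θ) θ :=
  hasDerivAt_dTh (differentiableAt_of_contDiffOn_stateSpace
    (contDiffOn_etaHat (m := 1) hψ (by norm_num)) one_ne_zero hθ)

theorem hasDerivAt_psi (hψ : ContDiffOn ℝ 2 (uncurry ψ) stateSpace) (hθ : 0 < θ) :
    HasDerivAt (ψ ξ) (-etaHat ψ ξ θ) θ :=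
  (hasDerivAt_dTh (differentiableAt_of_contDiffOn_stateSpace hψ two_ne_zero hθ)).congr_deriv
    (neg_neg _).symm

theorem exists_pos_mul_sq_le_thermalRel (hψ : ContDiffOn ℝ 2 (uncurry ψ) stateSpace)
    (hconv : PsiConvex ψ) {a : ℝ} (ha : 0 < a) (L : ℝ) :
    ∃ m : ℝ, 0 < m ∧ ∀ ξ θ θ', (ξ, θ) ∈ thermoBox a L → θ' ∈ Icc a L →
      m * (θ - θ') ^ 2 ≤ thermalRel ψ ξ θ θ' := by
  have hcont : ContinuousOn (uncurry (dTh (etaHat ψ))) (thermoBox a L) :=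
    (contDiffOn_dTh (m := 0) (contDiffOn_etaHat (m := 1) hψ (by norm_num))
      (by simp)).continuousOn.mono (thermoBox_subset_stateSpace ha)
  obtain ⟨m, hm, hη⟩ := isCompact_thermoBox.exists_forall_le' hcont
    (fun z hz => (hconv z.1 z.2 (thermoBox_subset_stateSpace ha hz).2).2)
  refine ⟨m / 2, half_pos hm, fun ξ θ θ' hz hθ' => ?_⟩
  have hmem : ∀ t ∈ uIcc θ θ', t ∈ Icc a L := fun t ht => uIcc_subset_Icc hz.2 hθ' ht
  have taylor := half_mul_sq_le_of_le_deriv2 (x := θ) (y := θ') (m := m) (g := fun t => -ψ ξ t)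
    (fun t ht => by simpa using (hasDerivAt_psi hψ (ha.trans_le (hmem t ht).1)).fun_neg)
    (fun t ht => hasDerivAt_etaHat hψ (ha.trans_le (hmem t ht).1))
    (fun t ht => hη (ξ, t) ⟨hz.1, hmem t ht⟩)
  unfold thermalRel
  linarith

theorem exists_pos_mul_norm_sq_le_relEnt (hψ : ContDiffOn ℝ 2 (uncurry ψ) stateSpace)
    (hconv : PsiConvex ψ) {a : ℝ} (ha : 0 < a) (L : ℝ) :
    ∃ m : ℝ, 0 < m ∧ ∀ ξ v θ ξ' v' θ', (ξ, θ) ∈ thermoBox a L → (ξ', θ') ∈ thermoBox a L →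
      m * ‖(ξ, θ) - (ξ', θ')‖ ^ 2 ≤ relEnt ψ ξ v θ ξ' v' θ' := by
  obtain ⟨m₁, hm₁, h₁⟩ := exists_pos_mul_norm_sq_le_psiRel hψ hconv ha L
  obtain ⟨m₂, hm₂, h₂⟩ := exists_pos_mul_sq_le_thermalRel hψ hconv ha L
  refine ⟨min m₁ m₂, lt_min hm₁ hm₂, fun ξ v θ ξ' v' θ' hz hz' => ?_⟩
  calc min m₁ m₂ * ‖(ξ, θ) - (ξ', θ')‖ ^ 2
      ≤ min m₁ m₂ * (‖ξ - ξ'‖ ^ 2 + ‖θ - θ'‖ ^ 2) := by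
        gcongr
        exact norm_sq_le_add_norm_sq ((ξ, θ) - (ξ', θ'))
    _ ≤ m₁ * ‖ξ - ξ'‖ ^ 2 + m₂ * (θ - θ') ^ 2 := by
        rw [mul_add, Real.norm_eq_abs, sq_abs]
        gcongr
        exacts [min_le_left _ _, min_le_right _ _]
    _ ≤ psiRel ψ ξ θ' ξ' θ' + thermalRel ψ ξ θ θ' :=
        add_le_add (h₁ ξ ξ' θ' ⟨hz.1, hz'.2⟩ hz') (h₂ ξ θ θ' hz hz'.2)
    _ ≤ relEnt ψ ξ v θ ξ' v' θ' := psiRel_add_thermalRel_le_relEnt ψ ξ ξ' v v' θ θ'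

theorem relEnt_nonneg (hψ : ContDiffOn ℝ 2 (uncurry ψ) stateSpace) (hconv : PsiConvex ψ)
    {θ' : ℝ} (hθ : 0 < θ) (hθ' : 0 < θ') (ξ ξ' : Xi) (v v' : Vec3) :
    0 ≤ relEnt ψ ξ v θ ξ' v' θ' := by
  obtain ⟨m, hm, h⟩ := exists_pos_mul_norm_sq_le_relEnt hψ hconv (lt_min hθ hθ')
    (max (max ‖ξ‖ ‖ξ'‖) (max θ θ'))
  exact (by positivity : 0 ≤ m * ‖(ξ, θ) - (ξ', θ')‖ ^ 2).trans
    (h ξ v θ ξ' v' θ' (by simp [thermoBox]) (by simp [thermoBox]))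

theorem hasDerivAt_thermalRel (hψ : ContDiffOn ℝ 2 (uncurry ψ) stateSpace) (hθ : 0 < θ)
    (θ' : ℝ) :
    HasDerivAt (fun t => thermalRel ψ ξ t θ') (dTh (etaHat ψ) ξ θ * (θ - θ')) θ :=
  (((hasDerivAt_psi hψ hθ).sub_const (ψ ξ θ')).add
    ((hasDerivAt_etaHat hψ hθ).mul ((hasDerivAt_id θ).sub_const θ'))).congr_deriv (by simp)

theorem antitoneOn_relEnt (hψ : ContDiffOn ℝ 2 (uncurry ψ) stateSpace) (hconv : PsiConvex ψ)
    (ξ ξ' : Xi) (v v' : Vec3) (θ' : ℝ) :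
    AntitoneOn (fun θ => relEnt ψ ξ v θ ξ' v' θ') (Ioc 0 θ') := by
  have hthermal : AntitoneOn (fun θ => thermalRel ψ ξ θ θ') (Ioc 0 θ') :=
    antitoneOn_of_hasDerivWithinAt_nonpos (convex_Ioc 0 θ')
      (fun t ht => (hasDerivAt_thermalRel hψ ht.1 θ').continuousAt.continuousWithinAt)
      (fun t ht => (hasDerivAt_thermalRel hψ (interior_subset ht).1 θ').hasDerivWithinAt)
      (fun t ht => mul_nonpos_of_nonneg_of_nonpos (hconv ξ t (interior_subset ht).1).2.le
        (sub_nonpos.2 (interior_subset ht).2))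
  intro s hs t ht hst
  simp only [relEnt_eq_psiRel_add_thermalRel]
  gcongr
  exact hthermal hs ht hst

theorem exists_pos_le_relEnt_of_temperature_le (hψ : ContDiffOn ℝ 2 (uncurry ψ) stateSpace)
    (hconv : PsiConvex ψ) {a δ : ℝ} (ha : 0 < a) (haδ : a < δ) (L : ℝ) :
    ∃ κ : ℝ, 0 < κ ∧ ∀ ξ v θ ξ' v' θ', ‖ξ‖ ≤ L → 0 < θ → θ ≤ a → (ξ', θ') ∈ thermoBox δ L →
      κ ≤ relEnt ψ ξ v θ ξ' v' θ' := by
  obtain ⟨m, hm, h⟩ := exists_pos_mul_norm_sq_le_relEnt hψ hconv ha L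
  refine ⟨m * (δ - a) ^ 2, mul_pos hm (pow_pos (sub_pos.2 haδ) 2),
    fun ξ v θ ξ' v' θ' hξ hθ hθa hz' => ?_⟩
  have haθ' : a ≤ θ' := haδ.le.trans hz'.2.1
  have hdist : δ - a ≤ ‖(ξ, a) - (ξ', θ')‖ :=
    calc δ - a ≤ θ' - a := sub_le_sub_right hz'.2.1 a
      _ ≤ ‖a - θ'‖ := by rw [norm_sub_rev]; exact le_abs_self _
      _ ≤ ‖(ξ, a) - (ξ', θ')‖ := norm_snd_le ((ξ, a) - (ξ', θ'))
  calc m * (δ - a) ^ 2 ≤ m * ‖(ξ, a) - (ξ', θ')‖ ^ 2 := by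
        gcongr
    _ ≤ relEnt ψ ξ v a ξ' v' θ' :=
        h ξ v a ξ' v' θ' ⟨mem_closedBall_zero_iff.2 hξ, le_rfl, haθ'.trans hz'.2.2⟩
          (thermoBox_subset_thermoBox haδ.le le_rfl hz')
    _ ≤ relEnt ψ ξ v θ ξ' v' θ' :=
        antitoneOn_relEnt hψ hconv ξ ξ' v v' θ' ⟨hθ, hθa.trans haθ'⟩ ⟨ha, haθ'⟩ hθa

end RelativeEntropy

section Growth

open Function (uncurry)

/-- The weight `|ξ|_{p,q,r} + θ^ℓ` of the growth conditions. -/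
def growthWeight (p q r ℓ : ℝ) (ξ : Xi) (θ : ℝ) : ℝ := xiNorm p q r ξ + θ ^ ℓ

/-- The growth condition on the internal energy: it is comparable with the weight. -/
def EnergyGrowth (ψ : Xi → ℝ → ℝ) (c p q r ℓ : ℝ) : Prop :=
  ∀ ξ θ, 0 < θ → c * growthWeight p q r ℓ ξ θ - c ≤ eHat ψ ξ θ ∧
    eHat ψ ξ θ ≤ c * growthWeight p q r ℓ ξ θ + c

/-- The growth condition on the entropy `-∂_θ ψ`: it is of lower order than the weight. -/
def EntropyGrowth (ψ : Xi → ℝ → ℝ) (p q r ℓ : ℝ) : Prop :=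
  ∀ ε, 0 < ε → ∃ R, ∀ ξ θ, 0 < θ → R < growthWeight p q r ℓ ξ θ →
    |dTh ψ ξ θ| ≤ ε * growthWeight p q r ℓ ξ θ

variable {ψ : Xi → ℝ → ℝ} {c p q r ℓ : ℝ}

theorem xiNorm_nonneg (p q r : ℝ) (ξ : Xi) : 0 ≤ xiNorm p q r ξ :=
  add_nonneg (add_nonneg (rpow_nonneg (Real.sqrt_nonneg _) p) (rpow_nonneg (Real.sqrt_nonneg _) q))
    (rpow_nonneg (abs_nonneg _) r)

theorem exists_norm_le_mul_xiNorm_add (hp : 1 < p) (hq : 1 < q) (hr : 1 < r) {ε : ℝ} (hε : 0 < ε) :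
    ∃ T : ℝ, ∀ ξ, ‖ξ‖ ≤ ε * xiNorm p q r ξ + T := by
  obtain ⟨T₁, hT₁, h₁⟩ := exists_le_mul_rpow_add hp hε
  obtain ⟨T₂, hT₂, h₂⟩ := exists_le_mul_rpow_add hq hε
  obtain ⟨T₃, hT₃, h₃⟩ := exists_le_mul_rpow_add hr hε
  refine ⟨T₁ + T₂ + T₃, fun ξ => ?_⟩
  have hF : 0 ≤ mnorm ξ.1 := Real.sqrt_nonneg _
  have hζ : 0 ≤ mnorm ξ.2.1 := Real.sqrt_nonneg _
  have hF' : 0 ≤ ε * mnorm ξ.1 ^ p := by positivity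
  have hζ' : 0 ≤ ε * mnorm ξ.2.1 ^ q := by positivity
  have hw' : 0 ≤ ε * |ξ.2.2| ^ r := by positivity
  unfold xiNorm
  refine norm_le_of_mnorm_le ?_ ?_ ?_ <;>
    linarith [h₁ _ hF, h₂ _ hζ, h₃ _ (abs_nonneg ξ.2.2)]

theorem exists_norm_le_and_le_of_growthWeight_le (hp : 1 < p) (hq : 1 < q) (hr : 1 < r)
    (hl : 0 < ℓ) (R : ℝ) :
    ∃ L : ℝ, ∀ ξ θ, 0 < θ → growthWeight p q r ℓ ξ θ ≤ R → ‖ξ‖ ≤ L ∧ θ ≤ L := by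
  obtain ⟨T, hT⟩ := exists_norm_le_mul_xiNorm_add hp hq hr one_pos
  refine ⟨max (R + T) (R ^ ℓ⁻¹), fun ξ θ hθ hR => ?_⟩
  have hθℓ : 0 < θ ^ ℓ := rpow_pos_of_pos hθ ℓ
  have hξ : 0 ≤ xiNorm p q r ξ := xiNorm_nonneg p q r ξ
  unfold growthWeight at hR
  have hθR : θ ≤ R ^ ℓ⁻¹ :=
    (Real.le_rpow_inv_iff_of_pos hθ.le (by linarith) hl).2 (by linarith)
  exact ⟨le_max_of_le_left (by linarith [hT ξ]), le_max_of_le_right hθR⟩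

theorem exists_tangent_le_mul_xiNorm_add (hψ : ContDiffOn ℝ 1 (uncurry ψ) stateSpace)
    (hp : 1 < p) (hq : 1 < q) (hr : 1 < r) {a : ℝ} (ha : 0 < a) (L : ℝ) {ε : ℝ} (hε : 0 < ε) :
    ∃ T : ℝ, ∀ ξ ξ' θ', (ξ', θ') ∈ thermoBox a L →
      ψ ξ' θ' + ∑ B, dXi B ψ ξ' θ' * (xiComp ξ B - xiComp ξ' B) ≤ ε * xiNorm p q r ξ + T := by
  have hsub : thermoBox a L ⊆ stateSpace := thermoBox_subset_stateSpace ha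
  obtain ⟨A, hA⟩ := isCompact_thermoBox.exists_bound_of_continuousOn (hψ.continuousOn.mono hsub)
  obtain ⟨D, hD⟩ := isCompact_thermoBox.exists_bound_of_continuousOn
    ((hψ.continuousOn_fderiv_of_isOpen isOpen_stateSpace le_rfl).mono hsub)
  obtain ⟨T, hT⟩ := exists_norm_le_mul_xiNorm_add hp hq hr
    (div_pos hε (by positivity : 0 < |D| + 1))
  refine ⟨A + (|D| + 1) * (T + L), fun ξ ξ' θ' hz' => ?_⟩
  have hθ' : 0 < θ' := ha.trans_le hz'.2.1
  have hdiff : ‖ξ - ξ'‖ ≤ ε / (|D| + 1) * xiNorm p q r ξ + T + L :=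
    (norm_sub_le ξ ξ').trans (add_le_add (hT ξ) (mem_closedBall_zero_iff.1 hz'.1))
  have hgrad : ‖fderiv ℝ (uncurry ψ) (ξ', θ')‖ ≤ |D| + 1 :=
    (hD _ hz').trans ((le_abs_self D).trans (le_add_of_nonneg_right zero_le_one))
  have hlin : ∑ B, dXi B ψ ξ' θ' * (xiComp ξ B - xiComp ξ' B) ≤
      (|D| + 1) * (ε / (|D| + 1) * xiNorm p q r ξ + T + L) := by
    simp_rw [← xiComp_sub]
    rw [sum_dXi_mul_xiComp (differentiableAt_of_contDiffOn_stateSpace hψ one_ne_zero hθ')]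
    refine (le_abs_self _).trans (ContinuousLinearMap.le_of_opNorm_le_of_le _ hgrad ?_)
    simpa using hdiff
  calc ψ ξ' θ' + ∑ B, dXi B ψ ξ' θ' * (xiComp ξ B - xiComp ξ' B)
      ≤ A + (|D| + 1) * (ε / (|D| + 1) * xiNorm p q r ξ + T + L) :=
        add_le_add ((le_abs_self _).trans (hA _ hz')) hlin
    _ = ε * xiNorm p q r ξ + (A + (|D| + 1) * (T + L)) := by field_simp; ring

theorem relEnt_eq_eHat_sub (ψ : Xi → ℝ → ℝ) (ξ ξ' : Xi) (v v' : Vec3) (θ θ' : ℝ) :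
    relEnt ψ ξ v θ ξ' v' θ' = eHat ψ ξ θ - θ' * etaHat ψ ξ θ
      - (ψ ξ' θ' + ∑ B, dXi B ψ ξ' θ' * (xiComp ξ B - xiComp ξ' B))
      + 1 / 2 * ∑ i, (v i - v' i) ^ 2 := by
  unfold relEnt psiRel eHat etaHat
  ring

theorem exists_eHat_le_relEnt_of_lt_growthWeight (hψ : ContDiffOn ℝ 1 (uncurry ψ) stateSpace)
    (hc : 0 < c) (henergy : EnergyGrowth ψ c p q r ℓ) (hentropy : EntropyGrowth ψ p q r ℓ)
    (hp : 1 < p) (hq : 1 < q) (hr : 1 < r) {a L : ℝ} (ha : 0 < a) (hL : 0 < L) :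
    ∃ R : ℝ, ∀ ξ v θ ξ' v' θ', 0 < θ → R < growthWeight p q r ℓ ξ θ →
      (ξ', θ') ∈ thermoBox a L → eHat ψ ξ θ ≤ 8 * relEnt ψ ξ v θ ξ' v' θ' := by
  obtain ⟨R, hR⟩ := hentropy (c / (4 * L)) (by positivity)
  obtain ⟨T, hT⟩ := exists_tangent_le_mul_xiNorm_add hψ hp hq hr ha L (by positivity : 0 < c / 4)
  refine ⟨max R (max 1 (4 * (c + T) / c)), fun ξ v θ ξ' v' θ' hθ hN hz' => ?_⟩
  obtain ⟨hNR, hN1, hNT⟩ := by simpa only [max_lt_iff] using hN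
  rw [div_lt_iff₀ hc] at hNT
  set N := growthWeight p q r ℓ ξ θ
  have hξN : xiNorm p q r ξ ≤ N := le_add_of_nonneg_right (rpow_nonneg hθ.le ℓ)
  have hη : θ' * etaHat ψ ξ θ ≤ c / 4 * N :=
    calc θ' * etaHat ψ ξ θ ≤ θ' * |dTh ψ ξ θ| :=
          mul_le_mul_of_nonneg_left (neg_le_abs _) (ha.le.trans hz'.2.1)
      _ ≤ L * (c / (4 * L) * N) :=
          mul_le_mul hz'.2.2 (hR ξ θ hθ hNR) (abs_nonneg _) hL.le
      _ = c / 4 * N := by field_simp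
  have hv : 0 ≤ 1 / 2 * ∑ i, (v i - v' i) ^ 2 := by positivity
  have hlower : c / 4 * N ≤ relEnt ψ ξ v θ ξ' v' θ' := by
    rw [relEnt_eq_eHat_sub]
    nlinarith [(henergy ξ θ hθ).1, hT ξ ξ' θ' hz']
  nlinarith [(henergy ξ θ hθ).2]

theorem exists_eHat_le_mul_relEnt_of_notMem_thermoBox
    (hψ : ContDiffOn ℝ 2 (uncurry ψ) stateSpace) (hconv : PsiConvex ψ)
    (hc : 0 < c) (henergy : EnergyGrowth ψ c p q r ℓ) (hentropy : EntropyGrowth ψ p q r ℓ)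
    (hp : 1 < p) (hq : 1 < q) (hr : 1 < r) (hl : 0 < ℓ)
    {a δ M : ℝ} (ha : 0 < a) (haδ : a < δ) (hM : 0 < M) :
    ∃ L C : ℝ, M ≤ L ∧ 0 < C ∧ ∀ ξ v θ ξ' v' θ', 0 < θ → (ξ, θ) ∉ thermoBox a L →
      (ξ', θ') ∈ thermoBox δ M → eHat ψ ξ θ ≤ C * relEnt ψ ξ v θ ξ' v' θ' := by
  obtain ⟨R, hlarge⟩ := exists_eHat_le_relEnt_of_lt_growthWeight (hψ.of_le one_le_two) hc henergy
    hentropy hp hq hr (ha.trans haδ) hM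
  obtain ⟨L, hL⟩ := exists_norm_le_and_le_of_growthWeight_le hp hq hr hl R
  obtain ⟨κ, hκ, hcold⟩ := exists_pos_le_relEnt_of_temperature_le hψ hconv ha haδ (max L M)
  refine ⟨max L M, max 8 ((c * R + c) / κ), le_max_right L M, by positivity,
    fun ξ v θ ξ' v' θ' hθ hz hz' => ?_⟩
  rcases lt_or_ge R (growthWeight p q r ℓ ξ θ) with hN | hN
  · refine (hlarge ξ v θ ξ' v' θ' hθ hN hz').trans ?_
    gcongr
    · exact relEnt_nonneg hψ hconv hθ ((ha.trans haδ).trans_le hz'.2.1) ξ ξ' v v'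
    · exact le_max_left _ _
  · have hξ : ‖ξ‖ ≤ max L M := le_max_of_le_left (hL ξ θ hθ hN).1
    have hθa : θ ≤ a := by
      by_contra! haθ
      exact hz ⟨mem_closedBall_zero_iff.2 hξ, haθ.le, le_max_of_le_left (hL ξ θ hθ hN).2⟩
    calc eHat ψ ξ θ ≤ c * R + c := (henergy ξ θ hθ).2.trans (by gcongr)
      _ = (c * R + c) / κ * κ := by field_simp
      _ ≤ max 8 ((c * R + c) / κ) * relEnt ψ ξ v θ ξ' v' θ' := by
        gcongr
        · exact le_max_right _ _
        · exact hcold ξ v θ ξ' v' θ' hξ hθ hθa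
            (thermoBox_subset_thermoBox le_rfl (le_max_right L M) hz')

end Growth

section HeatConduction

open Function (uncurry)

/-- The relative heat-conductivity term `(θ²/k) |k/θ - k̄/θ̄|²`. -/
def heatRel (k : Xi → ℝ → ℝ) (ξ : Xi) (θ : ℝ) (ξ' : Xi) (θ' : ℝ) : ℝ :=
  θ ^ 2 / k ξ θ * (k ξ θ / θ - k ξ' θ' / θ') ^ 2

variable {ψ k : Xi → ℝ → ℝ} {a L : ℝ}

theorem contDiffOn_div_temperature {n : WithTop ℕ∞} (hk : ContDiffOn ℝ n (uncurry k) stateSpace) :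
    ContDiffOn ℝ n (fun z : Xi × ℝ => k z.1 z.2 / z.2) stateSpace :=
  hk.div contDiffOn_snd fun _ hz => (mem_stateSpace.1 hz).ne'

theorem exists_heatRel_le_mul_norm_sq (hk : ContDiffOn ℝ 1 (uncurry k) stateSpace)
    (hkpos : ∀ ξ θ, 0 < θ → 0 < k ξ θ) (ha : 0 < a) (L : ℝ) :
    ∃ C : ℝ, 0 ≤ C ∧ ∀ ξ θ ξ' θ', (ξ, θ) ∈ thermoBox a L → (ξ', θ') ∈ thermoBox a L →
      heatRel k ξ θ ξ' θ' ≤ C * ‖(ξ, θ) - (ξ', θ')‖ ^ 2 := by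
  have hsub : thermoBox a L ⊆ stateSpace := thermoBox_subset_stateSpace ha
  obtain ⟨K, hK⟩ := ((contDiffOn_div_temperature hk).mono hsub).exists_lipschitzOnWith one_ne_zero
    convex_thermoBox isCompact_thermoBox
  have hcont : ContinuousOn (fun z : Xi × ℝ => z.2 ^ 2 / k z.1 z.2) (thermoBox a L) :=
    (continuousOn_snd.pow 2).div (hk.continuousOn.mono hsub) fun z hz =>
      (hkpos z.1 z.2 (hsub hz).2).ne'
  obtain ⟨A, hA⟩ := isCompact_thermoBox.exists_bound_of_continuousOn hcont
  refine ⟨|A| * K ^ 2, by positivity, fun ξ θ ξ' θ' hz hz' => ?_⟩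
  have hlip : |k ξ θ / θ - k ξ' θ' / θ'| ≤ K * ‖(ξ, θ) - (ξ', θ')‖ := hK.norm_sub_le hz hz'
  calc heatRel k ξ θ ξ' θ' ≤ |A| * (K * ‖(ξ, θ) - (ξ', θ')‖) ^ 2 := by
        rw [heatRel, ← sq_abs (k ξ θ / θ - k ξ' θ' / θ')]
        gcongr
        exact (le_abs_self _).trans ((hA _ hz).trans (le_abs_self A))
    _ = |A| * K ^ 2 * ‖(ξ, θ) - (ξ', θ')‖ ^ 2 := by ring

theorem exists_heatRel_le_mul_relEnt_of_mem_thermoBox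
    (hψ : ContDiffOn ℝ 2 (uncurry ψ) stateSpace) (hconv : PsiConvex ψ)
    (hk : ContDiffOn ℝ 1 (uncurry k) stateSpace) (hkpos : ∀ ξ θ, 0 < θ → 0 < k ξ θ)
    (ha : 0 < a) (L : ℝ) :
    ∃ C : ℝ, ∀ ξ v θ ξ' v' θ', (ξ, θ) ∈ thermoBox a L → (ξ', θ') ∈ thermoBox a L →
      heatRel k ξ θ ξ' θ' ≤ C * relEnt ψ ξ v θ ξ' v' θ' := by
  obtain ⟨A, hA, hheat⟩ := exists_heatRel_le_mul_norm_sq hk hkpos ha L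
  obtain ⟨m, hm, hrel⟩ := exists_pos_mul_norm_sq_le_relEnt hψ hconv ha L
  refine ⟨A / m, fun ξ v θ ξ' v' θ' hz hz' => ?_⟩
  calc heatRel k ξ θ ξ' θ' ≤ A * ‖(ξ, θ) - (ξ', θ')‖ ^ 2 := hheat ξ θ ξ' θ' hz hz'
    _ = A / m * (m * ‖(ξ, θ) - (ξ', θ')‖ ^ 2) := by field_simp
    _ ≤ A / m * relEnt ψ ξ v θ ξ' v' θ' := by
      gcongr
      exact hrel ξ v θ ξ' v' θ' hz hz'

theorem exists_heatRel_le_mul_add (hk : ContinuousOn (uncurry k) stateSpace)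
    (hkpos : ∀ ξ θ, 0 < θ → 0 < k ξ θ) (ha : 0 < a) (L : ℝ) :
    ∃ C : ℝ, 0 < C ∧ ∀ ξ θ ξ' θ', 0 < θ → (ξ', θ') ∈ thermoBox a L →
      heatRel k ξ θ ξ' θ' ≤ C * (k ξ θ + θ ^ 2 / k ξ θ) := by
  obtain ⟨b, hb⟩ := isCompact_thermoBox.exists_bound_of_continuousOn
    ((contDiffOn_div_temperature (contDiffOn_zero.2 hk)).continuousOn.mono
      (thermoBox_subset_stateSpace (L := L) ha))
  refine ⟨2 * (1 + b ^ 2), by positivity, fun ξ θ ξ' θ' hθ hz' => ?_⟩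
  have hkθ : 0 < k ξ θ := hkpos ξ θ hθ
  refine (sq_div_mul_div_sub_sq_le hkθ hθ.ne' (k ξ' θ' / θ')).trans ?_
  have hb' : (k ξ' θ' / θ') ^ 2 ≤ b ^ 2 := sq_le_sq.2 ((hb _ hz').trans (le_abs_self b))
  gcongr

theorem bound_relative_heat_conductivity_general {c p q r ℓ : ℝ}
    (hψ : ContDiffOn ℝ 2 (uncurry ψ) stateSpace) (hconv : PsiConvex ψ)
    (hc : 0 < c) (henergy : EnergyGrowth ψ c p q r ℓ) (hentropy : EntropyGrowth ψ p q r ℓ)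
    (hp : 1 < p) (hq : 1 < q) (hr : 1 < r) (hl : 0 < ℓ)
    {M δ C' : ℝ} (hM : 0 < M) (hδ : 0 < δ)
    (hk : ContDiffOn ℝ 1 (uncurry k) stateSpace) (hkpos : ∀ ξ θ, 0 < θ → 0 < k ξ θ)
    (hC' : 0 < C') (hkbd : ∀ ξ θ, 0 < θ → k ξ θ + θ ^ 2 / k ξ θ ≤ C' * eHat ψ ξ θ) :
    ∃ C : ℝ, 0 < C ∧ ∀ (ξ : Xi) (v : Vec3) (θ : ℝ), 0 < θ → ∀ U' ∈ Gamma M δ,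
      θ ^ 2 / k ξ θ * (k ξ θ / θ - k U'.1 U'.2.2 / U'.2.2) ^ 2 ≤
        C * relEnt ψ ξ v θ U'.1 U'.2.1 U'.2.2 := by
  obtain ⟨L, C₁, hML, hC₁, hout⟩ := exists_eHat_le_mul_relEnt_of_notMem_thermoBox hψ hconv hc
    henergy hentropy hp hq hr hl (half_pos hδ) (half_lt_self hδ) hM
  obtain ⟨C₂, hC₂, hfar⟩ := exists_heatRel_le_mul_add hk.continuousOn hkpos hδ M
  obtain ⟨C₃, hnear⟩ :=
    exists_heatRel_le_mul_relEnt_of_mem_thermoBox hψ hconv hk hkpos (half_pos hδ) L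
  refine ⟨max (C₂ * C' * C₁) C₃, lt_max_of_lt_left (by positivity), fun ξ v θ hθ U' hU' => ?_⟩
  have hU := mem_thermoBox_of_mem_Gamma hU'
  have hI := relEnt_nonneg hψ hconv hθ (hδ.trans_le hU.2.1) ξ U'.1 v U'.2.1
  by_cases hz : (ξ, θ) ∈ thermoBox (δ / 2) L
  · exact (hnear ξ v θ U'.1 U'.2.1 U'.2.2 hz
      (thermoBox_subset_thermoBox (half_le_self hδ.le) hML hU)).trans
      (mul_le_mul_of_nonneg_right (le_max_right _ _) hI)
  · calc θ ^ 2 / k ξ θ * (k ξ θ / θ - k U'.1 U'.2.2 / U'.2.2) ^ 2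
        ≤ C₂ * (k ξ θ + θ ^ 2 / k ξ θ) := hfar ξ θ U'.1 U'.2.2 hθ hU
      _ ≤ C₂ * (C' * (C₁ * relEnt ψ ξ v θ U'.1 U'.2.1 U'.2.2)) := by
          gcongr
          exact (hkbd ξ θ hθ).trans
            (mul_le_mul_of_nonneg_left (hout ξ v θ U'.1 U'.2.1 U'.2.2 hθ hz hU) hC'.le)
      _ = C₂ * C' * C₁ * relEnt ψ ξ v θ U'.1 U'.2.1 U'.2.2 := by ring
      _ ≤ max (C₂ * C' * C₁) C₃ * relEnt ψ ξ v θ U'.1 U'.2.1 U'.2.2 :=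
          mul_le_mul_of_nonneg_right (le_max_left _ _) hI

end HeatConduction

/-- Appendix Lemma A.3, bound on the relative
heat-conductivity term. -/
theorem bound_relative_heat_conductivity
    (ψ : Xi → ℝ → ℝ) (c p q r ℓ : ℝ)
    (hψ3 : PsiC3 ψ) (hconv : PsiConvex ψ)
    (hgrow : GrowthCond ψ c p q r ℓ)
    (hp : 4 ≤ p) (hq : 1 < q) (hr : 1 < r) (hl : 1 < ℓ)
    (M δ : ℝ) (hM : 0 < M) (hδ : 0 < δ)
    (k : Xi → ℝ → ℝ)
    (hk1 : ContDiffOn ℝ 1 (fun z : Xi × ℝ => k z.1 z.2)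
      (Set.univ ×ˢ Set.Ioi (0:ℝ)))
    (hkpos : ∀ (ξ : Xi) (θ : ℝ), 0 < θ → 0 < k ξ θ)
    (δ' C' : ℝ) (hδ' : 0 < δ') (hC' : 0 < C')
    (hkbd : ∀ (ξ : Xi) (θ : ℝ), 0 < θ →
      k ξ θ + θ^2 / k ξ θ ≤ C' * eHat ψ ξ θ) :
    ∃ C : ℝ, 0 < C ∧
      ∀ (ξ : Xi) (v : Vec3) (θ : ℝ), δ' ≤ θ → ∀ U' ∈ Gamma M δ,
        θ^2 / k ξ θ * (k ξ θ / θ - k U'.1 U'.2.2 / U'.2.2)^2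
          ≤ C * relEnt ψ ξ v θ U'.1 U'.2.1 U'.2.2 := by
  obtain ⟨C, hC, h⟩ := bound_relative_heat_conductivity_general (hψ3.of_le (by norm_num)) hconv
    hgrow.1 hgrow.2.1 hgrow.2.2.2 (by linarith) hq hr (by linarith) hM hδ hk1 hkpos hC' hkbd
  exact ⟨C, hC, fun ξ v θ hθ => h ξ v θ (hδ'.trans_le hθ)⟩

end
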